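/- Let V be a 2n-dimensional symplectic space, x self-adjoint with x² = 0, v ∉ ker(x), and F ⊆ ker(x) ∩ (ℂ[x]v)^⊥ an isotropic subspace with xv ∉ F. Then (F + ℂxv + ℂv) ∩ x(F^⊥) = ((F + ℂv) ∩ x(F^⊥)) + ℂxv, and consequently dim((F + ℂ[x]v) ∩ x(F^⊥)) = dim(F ∩ x(F^⊥)) + 1. -/

import Mathlib

open Module Submodule LinearMap

noncomputable section

variable {V : Type*} [AddCommGroup V] [Module ℂ V]

/-- Perpendicular of a subspace with respect to a bilinear form. -/
def perp (B : V →ₗ[ℂ] V →ₗ[ℂ] ℂ) (W : Submodule ℂ V) : Submodule ℂ V where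
  carrier := {v | ∀ w ∈ W, B v w = 0}
  add_mem' := by
    intro a b ha hb w hw
    simp [map_add, ha w hw, hb w hw]
  zero_mem' := by intro w hw; simp
  smul_mem' := by
    intro c a ha w hw
    simp [map_smul, ha w hw]

@[simp] lemma mem_perp {B : V →ₗ[ℂ] V →ₗ[ℂ] ℂ} {W : Submodule ℂ V} {v : V} :
    v ∈ perp B W ↔ ∀ w ∈ W, B v w = 0 := Iff.rfl

/-- The subquotient W/U for U ≤ W. -/
abbrev SubQuot (W U : Submodule ℂ V) : Type _ := W ⧸ (U.comap W.subtype)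

/-- The endomorphism induced on the subquotient W/U by x. -/
def subQuotMap (x : V →ₗ[ℂ] V) (W U : Submodule ℂ V)
    (hW : ∀ v ∈ W, x v ∈ W) (hU : ∀ v ∈ U, x v ∈ U) :
    SubQuot W U →ₗ[ℂ] SubQuot W U :=
  Submodule.mapQ _ _ (x.restrict hW) (by
    intro a ha
    simp only [Submodule.mem_comap, LinearMap.restrict_apply, Submodule.coe_subtype] at ha ⊢
    exact hU a.1 ha)

/-- The Zariski topology on a complex vector space. -/
def zariski (M : Type*) [AddCommGroup M] [Module ℂ M] : TopologicalSpace M :=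
  TopologicalSpace.generateFrom
    {U | ∃ f : M → ℂ,
      f ∈ Algebra.adjoin ℂ {g : M → ℂ | ∃ φ : M →ₗ[ℂ] ℂ, g = ⇑φ} ∧ U = {x | f x ≠ 0}}

/-- The Grassmannian of k-dimensional subspaces of M. -/
def Grass (M : Type*) [AddCommGroup M] [Module ℂ M] (k : ℕ) : Type _ :=
  {F : Submodule ℂ M // finrank ℂ F = k}

/-- The Zariski topology on the Grassmannian, coinduced from the space of
linearly independent k-tuples with its Zariski topology. -/
instance grassTopology (M : Type*) [AddCommGroup M] [Module ℂ M] (k : ℕ) :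
    TopologicalSpace (Grass M k) :=
  TopologicalSpace.coinduced
    (fun v : {v : Fin k → M // LinearIndependent ℂ v} =>
      (⟨Submodule.span ℂ (Set.range v.1),
        (finrank_span_eq_card v.2).trans (by simp)⟩ : Grass M k))
    (TopologicalSpace.induced Subtype.val (zariski (Fin k → M)))

end

/-!
Put `P = F^⊥` and `M = x(P)`. Since `v ∈ P`, the line `ℂxv` lies in `M`, so the modular law moves it
out of `(F + ℂv + ℂxv) ∩ M`. Both `F` and, because `x² = 0`, `M` lie in `ker x`, which `ℂv` meets
only in `0`; by the modular law again, `(F + ℂv) ∩ M = F ∩ M`. What is left is `(F ∩ M) + ℂxv`, and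
this sum is direct because `xv ∉ F`.
-/

lemma sup_inf_eq_inf_of_disjoint {α : Type*} [Lattice α] [OrderBot α] [IsModularLattice α]
    {a b c k : α} (ha : a ≤ k) (hc : c ≤ k) (hb : Disjoint b k) : (a ⊔ b) ⊓ c = a ⊓ c :=
  calc (a ⊔ b) ⊓ c = (a ⊔ b) ⊓ k ⊓ c := by rw [inf_assoc, inf_eq_right.2 hc]
    _ = (a ⊔ b ⊓ k) ⊓ c := by rw [sup_inf_assoc_of_le b ha]
    _ = a ⊓ c := by rw [hb.eq_bot, sup_bot_eq]

section DivisionRing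

variable {K V : Type*} [DivisionRing K] [AddCommGroup V] [Module K V]

lemma rank_sup_span_singleton {N : Submodule K V} {u : V} (hu : u ∉ N) :
    Module.rank K ↥(N ⊔ span K {u}) = Module.rank K N + 1 := by
  have hu0 : u ≠ 0 := (ne_of_mem_of_not_mem N.zero_mem hu).symm
  have hdisj : Disjoint N (span K {u}) := disjoint_span_singleton_of_notMem hu
  have hrank := rank_sup_add_rank_inf_eq N (span K {u})
  rwa [hdisj.eq_bot, rank_bot, add_zero,
    ← finrank_eq_rank K (span K {u}), finrank_span_singleton hu0, Nat.cast_one] at hrank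

theorem stmt19_general {x : V →ₗ[K] V} (hx2 : x ∘ₗ x = 0) {F P : Submodule K V} {v : V}
    (hFker : F ≤ ker x) (hvP : v ∈ P) (hxv : x v ∉ F) :
    (F ⊔ span K {x v} ⊔ span K {v}) ⊓ P.map x =
      ((F ⊔ span K {v}) ⊓ P.map x) ⊔ span K {x v} ∧
    Module.rank K ↥((F ⊔ span K {v, x v}) ⊓ P.map x) =
      Module.rank K ↥(F ⊓ P.map x) + 1 := by
  have hspan : span K {x v} ≤ P.map x :=
    (span_singleton_le_iff_mem _ _).2 (mem_map_of_mem hvP)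
  have hmap : P.map x ≤ ker x := map_le_range.trans (range_le_ker_iff.2 hx2)
  have hv : v ∉ ker x := fun h => hxv ((mem_ker.1 h).symm ▸ F.zero_mem)
  have hdisj : Disjoint (span K {v}) (ker x) := (disjoint_span_singleton_of_notMem hv).symm
  have hmod : (F ⊔ span K {x v} ⊔ span K {v}) ⊓ P.map x =
      ((F ⊔ span K {v}) ⊓ P.map x) ⊔ span K {x v} := by
    rw [sup_right_comm, inf_comm, ← inf_sup_assoc_of_le _ hspan, inf_comm]
  have hinf : (F ⊔ span K {v}) ⊓ P.map x = F ⊓ P.map x :=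
    sup_inf_eq_inf_of_disjoint hFker hmap hdisj
  have hxvM : x v ∉ F ⊓ P.map x := fun h => hxv (mem_inf.1 h).1
  refine ⟨hmod, ?_⟩
  rw [span_insert, sup_comm (span K {v}), ← sup_assoc, hmod, hinf,
    rank_sup_span_singleton hxvM]

end DivisionRing

lemma le_perp_comm {V : Type*} [AddCommGroup V] [Module ℂ V] {B : V →ₗ[ℂ] V →ₗ[ℂ] ℂ}
    (hB : B.IsRefl) {U W : Submodule ℂ V} : U ≤ perp B W ↔ W ≤ perp B U :=
  ⟨fun h w hw u hu => hB u w (h hu w hw), fun h u hu w hw => hB w u (h hw u hu)⟩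

/-- for self-adjoint x with x² = 0, v ∉ ker x, and F ⊆ ker x ∩ (ℂ[x]v)^⊥
an isotropic subspace with xv ∉ F (here ℂ[x]v = span{v, xv}):
(F + ℂxv + ℂv) ∩ x(F^⊥) = ((F + ℂv) ∩ x(F^⊥)) + ℂxv, and consequently
dim((F + ℂ[x]v) ∩ x(F^⊥)) = dim(F ∩ x(F^⊥)) + 1. -/
theorem stmt19 (V : Type*) [AddCommGroup V] [Module ℂ V] [FiniteDimensional ℂ V]
    (n : ℕ) (hdim : finrank ℂ V = 2 * n)
    (B : V →ₗ[ℂ] V →ₗ[ℂ] ℂ) (hskew : ∀ v w : V, B w v = - B v w)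
    (hnondeg : ∀ v : V, (∀ w : V, B v w = 0) → v = 0)
    (x : V →ₗ[ℂ] V) (hsa : ∀ v w : V, B (x v) w = B v (x w)) (hx2 : x ∘ₗ x = 0)
    (v : V) (hv : v ∉ LinearMap.ker x)
    (F : Submodule ℂ V) (hiso : F ≤ perp B F) (hFker : F ≤ LinearMap.ker x)
    (hFperp : F ≤ perp B (Submodule.span ℂ {v, x v})) (hxv : x v ∉ F) :
    (F ⊔ Submodule.span ℂ {x v} ⊔ Submodule.span ℂ {v}) ⊓ (perp B F).map x =
      ((F ⊔ Submodule.span ℂ {v}) ⊓ (perp B F).map x) ⊔ Submodule.span ℂ {x v} ∧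
    finrank ℂ ↥((F ⊔ Submodule.span ℂ {v, x v}) ⊓ (perp B F).map x) =
      finrank ℂ ↥(F ⊓ (perp B F).map x) + 1 := by
  have hB : B.IsRefl := fun u w h => by rw [hskew, h, neg_zero]
  have hvF : v ∈ perp B F := (le_perp_comm hB).1 hFperp (mem_span_of_mem (Set.mem_insert v _))
  obtain ⟨hinf, hrank⟩ := stmt19_general hx2 hFker hvF hxv
  exact ⟨hinf, finrank_eq_of_rank_eq (by rw [hrank, ← finrank_eq_rank, Nat.cast_succ])⟩
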